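/- arXiv:2504.14929 — 6 statements merged into one kernel-verified Lean document; each statement's English description precedes it below -/
import Mathlib

section
/- Let a and b be integers with a > 1 and b > 1, where a is even, b is prime, and b ≡ 3 (mod 8). Then the equation (a^n − 1)(b^n − 1) = x^2 has no solution in positive integers n, x. -/
/-!
For odd `n` the product is `2` modulo `4`, so it is not a square. For `n = 2 * m` write
`a ^ n - 1 = d * y ^ 2` and `b ^ n - 1 = d * z ^ 2`, so that `(a ^ m, y)` and `(b ^ m, z)` both
solve the Pell equation `X ^ 2 - d * Y ^ 2 = 1`. The solutions with `X` odd form the kernel of a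
homomorphism to `ℤ / 2`. As `a ^ m` is even, the fundamental solution lies outside this kernel, so
`(b ^ m, z)` is up to sign an even power of it, hence up to sign the square of a solution `(w, _)`.
Thus `b ^ m = ± (2 * w ^ 2 - 1)`, and `2` is a square modulo `b`, which is impossible if
`b ≡ 3 [ZMOD 8]`.
-/

open Pell

open scoped NumberTheorySymbols

theorem exists_eq_mul_sq_of_mul_eq_sq {R : Type*} [CommRing R] [IsDomain R] [GCDMonoid R]
    {x y z : R} (h : x * y = z ^ 2) : ∃ d u v : R, x = d * u ^ 2 ∧ y = d * v ^ 2 := by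
  rcases eq_or_ne x 0 with rfl | hx
  · exact ⟨y, 0, 1, by simp, by simp⟩
  obtain ⟨x', y', hx', hy', hcoprime⟩ := extract_gcd x y
  set g := gcd x y
  have hg : g ≠ 0 := left_ne_zero_of_mul (hx' ▸ hx)
  have hx'ne : x' ≠ 0 := right_ne_zero_of_mul (hx' ▸ hx)
  have hz : g ^ 2 * (x' * y') = z ^ 2 := by
    rw [← h, hx', hy', sq, mul_mul_mul_comm]
  obtain ⟨w, rfl⟩ : g ∣ z := (IsIntegrallyClosed.pow_dvd_pow_iff two_ne_zero).1 ⟨_, hz.symm⟩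
  have hw : x' * y' = w ^ 2 := mul_left_cancel₀ (pow_ne_zero 2 hg) (by rw [hz, mul_pow])
  obtain ⟨u, ε, hu⟩ := exists_associated_pow_of_mul_eq_pow hcoprime hw
  have hu0 : u ^ 2 ≠ 0 := left_ne_zero_of_mul (hu ▸ hx'ne)
  obtain ⟨v, rfl⟩ : u ∣ w :=
    (IsIntegrallyClosed.pow_dvd_pow_iff two_ne_zero).1 ⟨ε * y', by rw [← hw, ← hu, mul_assoc]⟩
  have hv : ε * y' = v ^ 2 :=
    mul_left_cancel₀ hu0 (by rw [← mul_assoc, hu, hw, mul_pow])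
  refine ⟨g * ε, u, ↑ε⁻¹ * v, ?_, ?_⟩
  · rw [hx', ← hu, mul_assoc, mul_comm (ε : R)]
  · rw [hy', mul_pow, ← hv, mul_assoc, sq, mul_assoc, Units.inv_mul_cancel_left,
      Units.mul_inv_cancel_left]

theorem not_isSquare_of_emod_four {k : ℤ} (hk : k % 4 = 2 ∨ k % 4 = 3) : ¬ IsSquare k := by
  rintro ⟨r, rfl⟩
  rw [← sq] at hk
  rcases Int.even_or_odd r with hr | hr
  · have : r ^ 2 % 4 = 0 := Int.emod_eq_zero_of_dvd (pow_dvd_pow_of_dvd hr.two_dvd 2)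
    omega
  · have := Int.sq_mod_four_eq_one_of_odd hr
    omega

theorem not_isSquare_pow_sub_one_mul_pow_sub_one_of_odd {a b : ℤ} {n : ℕ} (ha : Even a)
    (hb : b % 4 = 3) (hn : Odd n) : ¬ IsSquare ((a ^ n - 1) * (b ^ n - 1)) := by
  have hbn : b ^ n ≡ -1 [ZMOD 4] := by
    have hb' : b ≡ -1 [ZMOD 4] := hb
    simpa only [hn.neg_one_pow] using hb'.pow n
  obtain ⟨u, hu⟩ : Odd (a ^ n - 1) := (ha.pow_of_ne_zero hn.pos.ne').sub_odd odd_one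
  have hprod : (a ^ n - 1) * (b ^ n - 1) ≡ (2 * u + 1) * (-1 - 1) [ZMOD 4] :=
    hu ▸ (hbn.sub_right 1).mul_left _
  apply not_isSquare_of_emod_four
  unfold Int.ModEq at hprod
  omega

section Pell

variable {d : ℤ}

theorem pell_x_sq (s : Solution₁ d) : (s ^ 2).x = 2 * s.x ^ 2 - 1 := by
  rw [sq, Solution₁.x_mul]
  linear_combination -s.prop

theorem emod_four_eq_three_of_pell_even_x {s : Solution₁ d} (hs : Even s.x) : d % 4 = 3 := by
  have hy : Odd s.y := by
    have hdy : Odd (d * s.y ^ 2) :=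
      s.prop_y ▸ (hs.pow_of_ne_zero two_ne_zero).sub_odd odd_one
    exact (Int.odd_pow' two_ne_zero).1 (Int.odd_mul.1 hdy).2
  have hx4 : (4 : ℤ) ∣ s.x ^ 2 := pow_dvd_pow_of_dvd hs.two_dvd 2
  have hy4 : s.y ^ 2 ≡ 1 [ZMOD 4] := Int.sq_mod_four_eq_one_of_odd hy
  have hdy : d * s.y ^ 2 ≡ d * 1 [ZMOD 4] := hy4.mul_left d
  have := s.prop_y
  unfold Int.ModEq at hdy
  omega

theorem pell_even_y_iff (hd : Odd d) (s : Solution₁ d) : Even s.y ↔ Odd s.x := by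
  have hparity : Odd (s.x ^ 2 - d * s.y ^ 2) := s.prop ▸ odd_one
  rw [Int.odd_sub, Int.odd_pow' two_ne_zero, Int.even_mul, Int.even_pow' two_ne_zero] at hparity
  rw [hparity, or_iff_right (Int.not_even_iff_odd.2 hd)]

theorem pell_odd_x_mul_iff (hd : Odd d) (s t : Solution₁ d) :
    Odd (s * t).x ↔ (Odd s.x ↔ Odd t.x) := by
  simp only [← pell_even_y_iff hd, Solution₁.y_mul, Int.even_add, Int.even_mul]
  have hs := pell_even_y_iff hd s
  have ht := pell_even_y_iff hd t
  rw [← Int.not_even_iff_odd] at hs ht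
  tauto

theorem pell_odd_x_zpow_iff (hd : Odd d) (s : Solution₁ d) (k : ℤ) :
    Odd (s ^ k).x ↔ Odd s.x ∨ Even k := by
  rcases Int.even_or_odd k with hk | hk
  · obtain ⟨j, rfl⟩ := hk
    simp [zpow_add, -Solution₁.x_mul, pell_odd_x_mul_iff hd]
  · obtain ⟨j, rfl⟩ := hk
    simp [zpow_add, two_mul, -Solution₁.x_mul, pell_odd_x_mul_iff hd]

theorem pell_exists_eq_sq_or_eq_neg_sq (hd : 0 < d) {s t : Solution₁ d} (hs : Even s.x)
    (ht : Odd t.x) : ∃ r : Solution₁ d, t = r ^ 2 ∨ t = -r ^ 2 := by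
  have hd4 := emod_four_eq_three_of_pell_even_x hs
  have hodd : Odd d := Int.odd_iff.2 (by omega)
  obtain ⟨f, hf⟩ :=
    IsFundamental.exists_of_not_isSquare hd (not_isSquare_of_emod_four (Or.inr hd4))
  have odd_x_iff {g : Solution₁ d} {k : ℤ} (hg : g = f ^ k ∨ g = -f ^ k) :
      Odd g.x ↔ Odd f.x ∨ Even k := by
    rw [← pell_odd_x_zpow_iff hodd f k]
    rcases hg with rfl | rfl
    · rfl
    · rw [Solution₁.x_neg, odd_neg]
  obtain ⟨i, hi⟩ := hf.eq_zpow_or_neg_zpow s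
  obtain ⟨k, hk⟩ := hf.eq_zpow_or_neg_zpow t
  have hfx : ¬ Odd f.x := fun hfx ↦ Int.not_odd_iff_even.2 hs ((odd_x_iff hi).2 (Or.inl hfx))
  obtain ⟨j, rfl⟩ : Even k := ((odd_x_iff hk).1 ht).resolve_left hfx
  exact ⟨f ^ j, by rwa [sq, ← zpow_add]⟩

end Pell

theorem exists_abs_eq_abs_two_mul_sq_sub_one {A B : ℤ} (hA : Even A) (hB : Odd B)
    (h : IsSquare ((A ^ 2 - 1) * (B ^ 2 - 1))) : ∃ w : ℤ, |B| = |2 * w ^ 2 - 1| := by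
  rcases eq_or_ne (B ^ 2) 1 with hB1 | hB1
  · exact ⟨1, (sq_eq_sq_iff_abs_eq_abs B _).1 (by rw [hB1]; norm_num)⟩
  obtain ⟨x, hx⟩ := h
  obtain ⟨d, y, z, hy, hz⟩ := exists_eq_mul_sq_of_mul_eq_sq (hx.trans (sq x).symm)
  have hd : 0 < d := by
    have hB0 : B ≠ 0 := by rintro rfl; simp at hB
    have hdz : 0 < d * z ^ 2 := by have := sq_pos_of_ne_zero hB0; omega
    exact pos_of_mul_pos_left hdz (sq_nonneg z)
  let s : Solution₁ d := Solution₁.mk A y (by linear_combination hy)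
  let t : Solution₁ d := Solution₁.mk B z (by linear_combination hz)
  obtain ⟨r, hr⟩ := pell_exists_eq_sq_or_eq_neg_sq hd (s := s) (t := t) hA hB
  have ht : t.x = (r ^ 2).x ∨ t.x = -(r ^ 2).x := by
    rw [← Solution₁.x_neg]
    exact hr.imp (congrArg _) (congrArg _)
  exact ⟨r.x, by rw [← pell_x_sq]; exact abs_eq_abs.2 ht⟩

theorem isSquare_two_of_dvd_two_mul_sq_sub_one {b w : ℤ} (h : b ∣ 2 * w ^ 2 - 1) :
    IsSquare (2 : ZMod b.natAbs) := by
  have hw : ((2 * w ^ 2 - 1 : ℤ) : ZMod b.natAbs) = 0 :=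
    (ZMod.intCast_zmod_eq_zero_iff_dvd _ _).2 (Int.natAbs_dvd.2 h)
  push_cast at hw
  exact ⟨2 * w, by linear_combination -2 * hw⟩

theorem not_isSquare_two_of_emod_eight_eq_three {b : ℤ} (hb : b % 8 = 3) :
    ¬ IsSquare (2 : ZMod b.natAbs) := by
  have hodd : Odd b.natAbs := Nat.odd_iff.2 (by omega)
  have hJ : J(2 | b.natAbs) = -1 := by
    have hmod : b.natAbs % 8 = 3 ∨ b.natAbs % 8 = 5 := by omega
    rw [jacobiSym.at_two hodd, ZMod.χ₈_nat_mod_eight]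
    rcases hmod with hmod | hmod <;> rw [hmod] <;> rfl
  exact_mod_cast ZMod.nonsquare_of_jacobiSym_eq_neg_one hJ

theorem not_isSquare_pow_sub_one_mul_pow_sub_one_of_even {a b : ℤ} {n : ℕ} (ha : Even a)
    (hb : Odd b) (h2 : ¬ IsSquare (2 : ZMod b.natAbs)) (hn : Even n) (hn0 : n ≠ 0) :
    ¬ IsSquare ((a ^ n - 1) * (b ^ n - 1)) := by
  obtain ⟨m, rfl⟩ := even_iff_exists_two_mul.1 hn
  have hm : m ≠ 0 := right_ne_zero_of_mul hn0
  rw [mul_comm 2 m, pow_mul, pow_mul]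
  intro h
  obtain ⟨w, hw⟩ := exists_abs_eq_abs_two_mul_sq_sub_one (ha.pow_of_ne_zero hm) hb.pow h
  have hdvd : b ∣ 2 * w ^ 2 - 1 := by
    rw [← dvd_abs, ← hw, dvd_abs]
    exact dvd_pow_self b hm
  exact h2 (isSquare_two_of_dvd_two_mul_sq_sub_one hdvd)

theorem stmt_3_general {a b : ℤ} {n : ℕ} (ha : Even a) (hb : b % 4 = 3)
    (h2 : ¬ IsSquare (2 : ZMod b.natAbs)) (hn : n ≠ 0) :
    ¬ IsSquare ((a ^ n - 1) * (b ^ n - 1)) := by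
  rcases Nat.even_or_odd n with heven | hodd
  · have hbodd : Odd b := Int.odd_iff.2 (by omega)
    exact not_isSquare_pow_sub_one_mul_pow_sub_one_of_even ha hbodd h2 heven hn
  · exact not_isSquare_pow_sub_one_mul_pow_sub_one_of_odd ha hb hodd

theorem stmt_3 (a b : ℤ) (ha : 1 < a) (hb : 1 < b)
    (haeven : Even a) (hbprime : Prime b) (hb8 : b % 8 = 3) :
    ¬ ∃ (n : ℕ) (x : ℤ), 0 < n ∧ 0 < x ∧ (a ^ n - 1) * (b ^ n - 1) = x ^ 2 := by
  rintro ⟨n, x, hn, -, h⟩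
  exact stmt_3_general haeven (by omega) (not_isSquare_two_of_emod_eight_eq_three hb8) hn.ne'
    ⟨x, h.trans (sq x)⟩
end

section
/- The only solutions in positive integers x, y of the equation x^3 = 2y^2 − 1 are (x, y) = (1, 1) and (x, y) = (23, 78). -/
/-!
Put `x = 2m - 1`, so that `m (x ^ 2 - x + 1) = y ^ 2`, where the two factors have no common prime
except possibly `3`. If `3 ∤ m`, then `x ^ 2 - x + 1` is a square, which forces `x = 1`. Otherwise
`m = 3a ^ 2` and `12a ^ 4 - 6a ^ 2 + 1 = b ^ 2`, so `2b + (4a ^ 2 - 1)√3` has norm one. Taking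
square roots in `ℤ[√3]`, up to the factors `2` and `2 + √3`, leads to a solution of
`X ^ 2 - 3Y ^ 2 = 1` with `XY` twice a square. There `(X, Y)` is either `(e ^ 2, 2f ^ 2)`, where
`f = 0` by descent, or `(2w ^ 2, r ^ 2)`; the latter gives `g ^ 4 + 1 = 2w ^ 2`, so `w ^ 4 - g ^ 4`
is a square and `g = 1` by Fermat's theorem that the area of a right triangle is never a square.
-/

/-! ### Products of coprime factors -/

theorem exists_eq_pow_of_coprime_of_mul_eq_pow {a b c k : ℕ} (hk : k ≠ 0) (hab : a.Coprime b)
    (h : a * b = c ^ k) : ∃ d e, a = d ^ k ∧ b = e ^ k ∧ c = d * e := by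
  obtain ⟨d, rfl⟩ := exists_eq_pow_of_mul_eq_pow (Nat.isUnit_iff.mpr hab) h
  obtain ⟨e, rfl⟩ :=
    exists_eq_pow_of_mul_eq_pow (Nat.isUnit_iff.mpr hab.symm) ((mul_comm _ _).trans h)
  exact ⟨d, e, rfl, rfl, Nat.pow_left_injective hk (by simp only [mul_pow, h])⟩

theorem exists_eq_pow_of_coprime_of_mul_eq_prime_mul_pow {a b c k p : ℕ} (hk : k ≠ 0)
    (hp : p.Prime) (hab : a.Coprime b) (h : a * b = p * c ^ k) :
    ∃ d e, c = d * e ∧ (a = p * d ^ k ∧ b = e ^ k ∨ a = d ^ k ∧ b = p * e ^ k) := by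
  rcases hp.dvd_mul.mp (Dvd.intro _ h.symm) with ⟨a, rfl⟩ | ⟨b, rfl⟩
  · obtain ⟨d, e, rfl, rfl, hc⟩ := exists_eq_pow_of_coprime_of_mul_eq_pow hk
      hab.coprime_mul_left (mul_left_cancel₀ hp.ne_zero ((mul_assoc _ _ _).symm.trans h))
    exact ⟨d, e, hc, .inl ⟨rfl, rfl⟩⟩
  · obtain ⟨d, e, rfl, rfl, hc⟩ := exists_eq_pow_of_coprime_of_mul_eq_pow hk
      hab.coprime_mul_left_right (mul_left_cancel₀ hp.ne_zero ((mul_left_comm _ _ _).trans h))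
    exact ⟨d, e, hc, .inr ⟨rfl, rfl⟩⟩

theorem exists_eq_sq_of_mul_add_mul_eq_sq {n k f : ℕ} (hk : Odd k) (hnk : n.Coprime k)
    (h : n * (n + k) * (k * (2 * n + k)) = f ^ 2) :
    ∃ r s t u, n + k = r ^ 2 ∧ n = s ^ 2 ∧ 2 * n + k = t ^ 2 ∧ k = u ^ 2 := by
  have hk_two_mul : k.Coprime (2 * n) := hk.coprime_two_right.mul_right hnk.symm
  have hn_add : n.Coprime (n + k) := by simpa using hnk
  have hk_add : k.Coprime (2 * n + k) := by simpa using hk_two_mul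
  have hcop : (n * (n + k)).Coprime (k * (2 * n + k)) := by
    have hn_two : n.Coprime (2 * n + k) := by simpa using hnk
    have hadd_k : (n + k).Coprime k := by simpa using hnk
    have hadd_add : (n + k).Coprime (2 * n + k) := by
      rw [show 2 * n + k = n + (n + k) by ring]
      simpa using hnk.symm
    exact (hnk.mul_right hn_two).mul_left (hadd_k.mul_right hadd_add)
  obtain ⟨_, _, hleft, hright, -⟩ := exists_eq_pow_of_coprime_of_mul_eq_pow two_ne_zero hcop h
  obtain ⟨s, r, hs, hr, -⟩ := exists_eq_pow_of_coprime_of_mul_eq_pow two_ne_zero hn_add hleft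
  obtain ⟨u, t, hu, ht, -⟩ := exists_eq_pow_of_coprime_of_mul_eq_pow two_ne_zero hk_add hright
  exact ⟨r, s, t, u, hr, hs, ht, hu⟩

/-! ### Fermat's right triangle theorem -/

theorem exists_param_of_coprime_of_sq_add_sq_eq_sq {a b c : ℕ} (ha : Odd a) (hab : a.Coprime b)
    (h : a ^ 2 + b ^ 2 = c ^ 2) :
    ∃ n k, n.Coprime k ∧ a = k * (2 * n + k) ∧ b = 2 * n * (n + k) ∧
      c = (n + k) ^ 2 + n ^ 2 := by
  have ha0 : (0 : ℤ) < a := by exact_mod_cast ha.pos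
  have hc0 : (0 : ℤ) < c := by
    have : 0 < c ^ 2 := h ▸ Nat.add_pos_left (pow_pos ha.pos 2) _
    exact_mod_cast Nat.pos_of_ne_zero (by rintro rfl; simp at this)
  have hpyth : PythagoreanTriple (a : ℤ) b c := by
    have : (a : ℤ) ^ 2 + b ^ 2 = c ^ 2 := by exact_mod_cast h
    unfold PythagoreanTriple
    linarith
  obtain ⟨m, n, ham, hbm, hcm, hmn, -, hm0⟩ := hpyth.coprime_classification'
    (by simpa using hab) (by exact_mod_cast Nat.odd_iff.mp ha) hc0
  have hm : 0 < m := hm0.lt_of_ne (by rintro rfl; nlinarith)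
  have hn : 0 ≤ n := by
    by_contra! hn
    have : (0 : ℤ) ≤ b := b.cast_nonneg
    nlinarith
  have hnm : n ≤ m := by nlinarith
  lift n to ℕ using hn
  obtain ⟨k, rfl⟩ := Int.le.dest hnm
  refine ⟨n, k, ?_, ?_, ?_, ?_⟩
  · exact_mod_cast (Nat.coprime_self_add_left.mp (by exact_mod_cast hmn)).symm
  · zify; linear_combination ham
  · zify; linear_combination hbm
  · exact_mod_cast hcm

/-- A nondegenerate right triangle with legs `a`, `b` and hypotenuse `c` whose area is a square.
The area `a * b / 2` is the square of `e / 2`, where `e` is necessarily even. -/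
structure IsSquareAreaTriangle (a b c : ℕ) : Prop where
  left_ne_zero : a ≠ 0
  right_ne_zero : b ≠ 0
  sq_add_sq : a ^ 2 + b ^ 2 = c ^ 2
  area : ∃ e, 2 * (a * b) = e ^ 2

namespace IsSquareAreaTriangle

variable {a b c : ℕ}

theorem symm (h : IsSquareAreaTriangle a b c) : IsSquareAreaTriangle b a c where
  left_ne_zero := h.right_ne_zero
  right_ne_zero := h.left_ne_zero
  sq_add_sq := (add_comm _ _).trans h.sq_add_sq
  area := mul_comm a b ▸ h.area

theorem of_mul {g : ℕ} (h : IsSquareAreaTriangle (a * g) (b * g) c) :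
    ∃ c', c = g * c' ∧ IsSquareAreaTriangle a b c' := by
  obtain ⟨ha, hb, hsq, e, harea⟩ := h
  obtain ⟨c, rfl⟩ : g ∣ c :=
    (Nat.pow_dvd_pow_iff two_ne_zero).mp ⟨a ^ 2 + b ^ 2, by rw [← hsq]; ring⟩
  obtain ⟨e, rfl⟩ : g ∣ e :=
    (Nat.pow_dvd_pow_iff two_ne_zero).mp ⟨2 * (a * b), by rw [← harea]; ring⟩
  have hg : g ^ 2 ≠ 0 := pow_ne_zero 2 (right_ne_zero_of_mul ha)
  exact ⟨c, rfl, left_ne_zero_of_mul ha, left_ne_zero_of_mul hb,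
    mul_left_cancel₀ hg (by linear_combination hsq),
    e, mul_left_cancel₀ hg (by linear_combination harea)⟩

-- The new legs are `(t - u) / 2` and `(t + u) / 2`, where `a = (t u) ^ 2`.
theorem exists_lt_of_coprime_of_odd (h : IsSquareAreaTriangle a b c) (hab : a.Coprime b)
    (ha : Odd a) : ∃ a' b' c', c' < c ∧ IsSquareAreaTriangle a' b' c' := by
  obtain ⟨-, hb, hsq, e, harea⟩ := h
  obtain ⟨n, k, hnk, rfl, rfl, rfl⟩ := exists_param_of_coprime_of_sq_add_sq_eq_sq ha hab hsq
  obtain ⟨hk, hnk_odd⟩ := Nat.odd_mul.mp ha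
  obtain ⟨f, rfl⟩ : 2 ∣ e := Nat.prime_two.dvd_of_dvd_pow (Dvd.intro _ harea)
  obtain ⟨r, s, t, u, hr, rfl, ht, rfl⟩ :=
    exists_eq_sq_of_mul_add_mul_eq_sq (f := f) hk hnk (by linarith)
  have hu : Odd u := (Nat.odd_pow_iff two_ne_zero).mp hk
  have ht_odd : Odd t := (Nat.odd_pow_iff two_ne_zero).mp (ht ▸ hnk_odd)
  have hut : u ≤ t := (Nat.pow_le_pow_iff_left two_ne_zero).mp (by omega)
  obtain ⟨v, rfl⟩ : ∃ v, t = u + 2 * v := by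
    obtain ⟨v, hv⟩ := Nat.Odd.sub_odd ht_odd hu
    exact ⟨v, by omega⟩
  have hs : 0 < s ^ 2 := Nat.pos_of_ne_zero (by rintro hs; simp [hs] at hb)
  have hv : v ≠ 0 := by
    rintro rfl
    simp only [mul_zero, add_zero] at ht
    omega
  refine ⟨v, u + v, r, ?_, hv, by omega, by linarith, s, by linarith⟩
  calc r ≤ r ^ 2 := Nat.le_self_pow two_ne_zero r
    _ ≤ (r ^ 2) ^ 2 := Nat.le_self_pow two_ne_zero _
    _ < (r ^ 2) ^ 2 + (s ^ 2) ^ 2 := Nat.lt_add_of_pos_right (pow_pos hs 2)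
    _ = (s ^ 2 + u ^ 2) ^ 2 + (s ^ 2) ^ 2 := by rw [hr]

theorem exists_lt (h : IsSquareAreaTriangle a b c) :
    ∃ a' b' c', c' < c ∧ IsSquareAreaTriangle a' b' c' := by
  obtain ⟨g, a, b, -, hab, rfl, rfl⟩ :=
    Nat.exists_coprime' (Nat.gcd_pos_of_pos_left b (Nat.pos_of_ne_zero h.left_ne_zero))
  obtain ⟨c, rfl, hprim⟩ := h.of_mul
  obtain ⟨a', b', c', hlt, h'⟩ : ∃ a' b' c', c' < c ∧ IsSquareAreaTriangle a' b' c' := by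
    rcases a.even_or_odd with ha | ha
    · have hb : Odd b := (hab.coprime_dvd_left ha.two_dvd).odd_of_left
      exact hprim.symm.exists_lt_of_coprime_of_odd hab.symm hb
    · exact hprim.exists_lt_of_coprime_of_odd hab ha
  have hg : 0 < g := Nat.pos_of_ne_zero (right_ne_zero_of_mul h.left_ne_zero)
  exact ⟨a', b', c', hlt.trans_le (Nat.le_mul_of_pos_left c hg), h'⟩

end IsSquareAreaTriangle

theorem not_isSquareAreaTriangle (a b c : ℕ) : ¬IsSquareAreaTriangle a b c := by
  induction c using Nat.strong_induction_on generalizing a b with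
  | h c ih =>
    intro h
    obtain ⟨a', b', c', hlt, h'⟩ := h.exists_lt
    exact ih c' hlt a' b' h'

theorem eq_zero_or_eq_zero_of_pow_four_eq_pow_four_add_sq {x y z : ℕ}
    (h : x ^ 4 = y ^ 4 + z ^ 2) : y = 0 ∨ z = 0 := by
  by_contra! ⟨hy, hz⟩
  have hx : x ≠ 0 := by
    rintro rfl
    have : 0 < y ^ 4 := by positivity
    omega
  refine not_isSquareAreaTriangle (z ^ 2) (2 * x ^ 2 * y ^ 2) (x ^ 4 + y ^ 4)
    ⟨by positivity, by positivity, ?_, 2 * x * y * z, by ring⟩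
  zify at h ⊢
  linear_combination (y ^ 4 - x ^ 4 - z ^ 2 : ℤ) * h

theorem eq_one_of_pow_four_add_one_eq_two_mul_sq {g w : ℕ} (h : g ^ 4 + 1 = 2 * w ^ 2) :
    g = 1 := by
  obtain ⟨z, hz⟩ : Odd (g ^ 4) := Nat.not_even_iff_odd.mp fun ⟨r, hr⟩ => by omega
  have hw : w ^ 2 = z + 1 := by omega
  have hquartic : w ^ 4 = g ^ 4 + z ^ 2 := by rw [hz, pow_mul w 2 2, hw]; ring
  rcases eq_zero_or_eq_zero_of_pow_four_eq_pow_four_add_sq hquartic with rfl | rfl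
  · omega
  · exact (Nat.pow_eq_one.mp hz).resolve_right four_ne_zero

/-! ### The Pell equation `x ^ 2 - 3 y ^ 2 = 1` -/

theorem sq_mod_three (n : ℕ) : n ^ 2 % 3 = 0 ∨ n ^ 2 % 3 = 1 := by
  have : n % 3 = 0 ∨ n % 3 = 1 ∨ n % 3 = 2 := by omega
  rcases this with h | h | h <;> simp [Nat.pow_mod, h]

/-- The Pell equation `x ^ 2 - 3 * y ^ 2 = 1`, rearranged so that it makes sense over `ℕ`. -/
abbrev IsPellThree (x y : ℕ) : Prop := x ^ 2 = 3 * y ^ 2 + 1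

namespace IsPellThree

variable {x y : ℕ}

theorem coprime (h : IsPellThree x y) : x.Coprime y := by
  refine (Nat.coprime_pow_left_iff two_pos x y).mp ?_
  rw [show x ^ 2 = y * (3 * y) + 1 by linear_combination h]
  simp

theorem even_iff_odd (h : IsPellThree x y) : Even x ↔ Odd y := by
  have hparity : Even (x ^ 2) ↔ Even (3 * y ^ 2 + 1) := iff_of_eq (congrArg Even h)
  simpa [Nat.even_pow, Nat.even_add_one, Nat.even_mul, show ¬Even 3 by decide] using hparity

theorem odd_iff_even (h : IsPellThree x y) : Odd x ↔ Even y := by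
  rw [← Nat.not_even_iff_odd, h.even_iff_odd, Nat.not_odd_iff_even]

-- `x + y √3 = (b + a √3) ^ 2`.
theorem exists_sqrt_of_odd (h : IsPellThree x y) (hx : Odd x) :
    ∃ a b, IsPellThree b a ∧ x = 6 * a ^ 2 + 1 ∧ y = 2 * (a * b) := by
  obtain ⟨m, rfl⟩ := (h.odd_iff_even.mp hx).two_dvd
  obtain ⟨d, rfl⟩ := hx
  have hprod : d * (d + 1) = 3 * m ^ 2 := by linarith
  obtain ⟨a, b, rfl, ⟨ha, hb⟩ | ⟨ha, hb⟩⟩ := exists_eq_pow_of_coprime_of_mul_eq_prime_mul_pow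
    two_ne_zero Nat.prime_three (by simp) hprod
  · exact ⟨a, b, by omega, by omega, rfl⟩
  · have := sq_mod_three a
    omega

-- `2 (x + y √3) = (p + q √3) ^ 2`.
theorem exists_sqrt_two_mul_of_even (h : IsPellThree x y) (hx : Even x) :
    ∃ p q, p.Coprime q ∧ x = p ^ 2 + 1 ∧ x + 1 = 3 * q ^ 2 ∧ y = p * q := by
  obtain ⟨z, rfl⟩ : ∃ z, x = z + 1 := Nat.exists_eq_succ_of_ne_zero (by rintro rfl; omega)
  have hz : Odd z := by rwa [← Nat.not_even_iff_odd, ← Nat.even_add_one]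
  have hprod : z * (z + 2) = 3 * y ^ 2 := by linarith
  have hcop : z.Coprime (z + 2) := by simpa using hz
  obtain ⟨p, q, rfl, ⟨hp, hq⟩ | ⟨hp, hq⟩⟩ := exists_eq_pow_of_coprime_of_mul_eq_prime_mul_pow
    two_ne_zero Nat.prime_three hcop hprod
  · have := sq_mod_three q
    omega
  · refine ⟨p, q, ?_, by omega, by omega, rfl⟩
    rw [hq, hp] at hcop
    exact (Nat.coprime_pow_left_iff two_pos _ _).mp <|
      (Nat.coprime_pow_right_iff two_pos _ _).mp hcop.coprime_mul_left_right

theorem exists_sqrt_of_sq {e : ℕ} (h : IsPellThree (e ^ 2) y) (he : Odd e) :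
    ∃ a b, IsPellThree b a ∧ y = 2 * (a * b) ∧ Even a := by
  obtain ⟨a, b, hab, hea, hy⟩ := h.exists_sqrt_of_odd he.pow
  refine ⟨a, b, hab, hy, Nat.not_odd_iff_even.mp fun ⟨j, hj⟩ => ?_⟩
  have hmod : e ^ 2 % 4 = 3 := by
    rw [hea, hj, show 6 * (2 * j + 1) ^ 2 + 1 = 3 + 4 * (6 * j ^ 2 + 6 * j + 1) by ring]
    simp
  obtain ⟨i, rfl⟩ := he
  ring_nf at hmod
  omega

-- Taking the square root in `ℤ[√3]` twice turns a solution into a smaller one of the same shape.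
theorem eq_zero_of_sq_of_two_mul_sq {e f : ℕ} (h : IsPellThree (e ^ 2) (2 * f ^ 2)) : f = 0 := by
  induction f using Nat.strong_induction_on generalizing e with
  | h f ih =>
    by_contra hf
    have he : Odd e :=
      (Nat.odd_pow_iff two_ne_zero).mp (h.odd_iff_even.mpr (even_two_mul _))
    obtain ⟨a, b, hab, hf_sq, ha⟩ := h.exists_sqrt_of_sq he
    obtain ⟨r, s, rfl, rfl, rfl⟩ := exists_eq_pow_of_coprime_of_mul_eq_pow (c := f) two_ne_zero
      hab.coprime.symm (by omega)
    have hs : Odd s := (Nat.odd_pow_iff two_ne_zero).mp (hab.odd_iff_even.mpr ha)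
    obtain ⟨a', b', hab', hr_sq, ha'⟩ := hab.exists_sqrt_of_sq hs
    obtain ⟨c, rfl⟩ := ha'.two_dvd
    obtain ⟨t, rfl⟩ : 2 ∣ r := Nat.prime_two.dvd_of_dvd_pow (Dvd.intro _ hr_sq.symm)
    obtain ⟨f', e', rfl, rfl, rfl⟩ := exists_eq_pow_of_coprime_of_mul_eq_pow (c := t) two_ne_zero
      hab'.coprime.symm.coprime_mul_left (by linarith)
    have hlt : f' < 2 * (f' * e') * s := by
      have hpos : 0 < f' * (e' * s) :=
        Nat.pos_of_ne_zero fun h0 => hf (by linear_combination 2 * h0)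
      have hle := Nat.le_mul_of_pos_right f' (pos_of_mul_pos_right hpos f'.zero_le)
      calc f' < 2 * (f' * (e' * s)) := by omega
        _ = 2 * (f' * e') * s := by ring
    exact hf (by simp [ih f' hlt hab'])

theorem eq_one_of_two_mul_sq_of_sq {w r : ℕ} (h : IsPellThree (2 * w ^ 2) (r ^ 2)) :
    w = 1 ∧ r = 1 := by
  obtain ⟨p, q, hpq, hp, -, hr⟩ := h.exists_sqrt_two_mul_of_even (even_two_mul _)
  obtain ⟨g, -, rfl, -, -⟩ := exists_eq_pow_of_coprime_of_mul_eq_pow two_ne_zero hpq hr.symm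
  obtain rfl := eq_one_of_pow_four_add_one_eq_two_mul_sq (g := g) (w := w)
    (by linear_combination -hp)
  obtain rfl : w = 1 := (Nat.pow_eq_one.mp (by omega : w ^ 2 = 1)).resolve_right two_ne_zero
  have hr_sq : (r ^ 2) ^ 2 = 1 := by omega
  simpa using hr_sq

theorem eq_zero_or_eq_two_one_of_mul_eq_two_mul_sq {t : ℕ} (h : IsPellThree x y)
    (ht : x * y = 2 * t ^ 2) : y = 0 ∨ x = 2 ∧ y = 1 := by
  obtain ⟨a, b, -, ⟨rfl, rfl⟩ | ⟨rfl, rfl⟩⟩ :=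
    exists_eq_pow_of_coprime_of_mul_eq_prime_mul_pow two_ne_zero Nat.prime_two h.coprime ht
  · obtain ⟨rfl, rfl⟩ := h.eq_one_of_two_mul_sq_of_sq
    simp
  · obtain rfl := h.eq_zero_of_sq_of_two_mul_sq
    simp

theorem exists_coprime_of_even (h : IsPellThree x y) (hx : Even x) :
    ∃ s t, s.Coprime t ∧ x = 2 * s ∧ x + 2 * y = 4 * t := by
  have hy : Odd y := h.even_iff_odd.mp hx
  have hxy := h.coprime
  obtain ⟨s, rfl⟩ := hx.two_dvd
  have hs : Odd s := by
    obtain ⟨j, rfl⟩ := hy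
    have hs_sq : s ^ 2 = 3 * (j * (j + 1)) + 1 := by linarith
    exact (Nat.odd_pow_iff two_ne_zero).mp (hs_sq ▸ ((Nat.even_mul_succ_self j).mul_left 3).add_one)
  obtain ⟨t, ht⟩ := (hs.add_odd hy).two_dvd
  have hst : s.Coprime (2 * t) := by simpa [← ht] using hxy.coprime_mul_left
  exact ⟨s, t, hst.coprime_mul_left_right, rfl, by omega⟩

-- `(2 + √3) (x + y √3) = (2x + 3y) + (x + 2y) √3` has odd rational part, hence is a square.
theorem eq_two_of_mul_add_two_mul_eq_two_mul_sq {a : ℕ} (h : IsPellThree x y)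
    (ha : x * (x + 2 * y) = 2 * a ^ 2) : a = 2 := by
  have hx : Even x := by
    have : Even (x * (x + 2 * y)) := ha ▸ even_two_mul _
    simpa [Nat.even_mul, Nat.even_add] using this
  obtain ⟨s, t, hst, hs, ht⟩ := h.exists_coprime_of_even hx
  have hst_mul : 4 * (s * t) = a ^ 2 := by
    rw [ht, hs] at ha
    linarith
  obtain ⟨m, rfl⟩ : 2 ∣ a := Nat.prime_two.dvd_of_dvd_pow (n := 2) (by omega)
  obtain ⟨c, d, rfl, rfl, rfl⟩ :=
    exists_eq_pow_of_coprime_of_mul_eq_pow (c := m) two_ne_zero hst (by linarith)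
  have hodd : Odd (2 * x + 3 * y) :=
    (even_two_mul x).add_odd (Nat.odd_mul.mpr ⟨by decide, h.even_iff_odd.mp hx⟩)
  have hnext : IsPellThree (2 * x + 3 * y) (x + 2 * y) := by linear_combination h
  obtain ⟨a, b, hba, hx_next, hy_next⟩ := hnext.exists_sqrt_of_odd hodd
  rcases hba.eq_zero_or_eq_two_one_of_mul_eq_two_mul_sq (t := d) (by linarith) with
    rfl | ⟨rfl, rfl⟩
  · omega
  · obtain ⟨hc, hd⟩ : c ^ 2 = 1 ∧ d ^ 2 = 1 := by omega
    rw [(Nat.pow_eq_one.mp hc).resolve_right two_ne_zero,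
      (Nat.pow_eq_one.mp hd).resolve_right two_ne_zero]

end IsPellThree

-- `p + q √3 = (1 + √3) (x + y √3)`.
theorem exists_isPellThree_of_sq_add_two_eq_three_mul_sq {p q : ℕ} (h : p ^ 2 + 2 = 3 * q ^ 2) :
    ∃ x y, IsPellThree x y ∧ p = x + 3 * y ∧ q = x + y := by
  have hqp : q ≤ p := by
    by_contra! hlt
    nlinarith
  have hparity : Even p ↔ Even q := by
    have : Even (p ^ 2 + 2) ↔ Even (3 * q ^ 2) := by rw [h]
    simpa [Nat.even_add, Nat.even_mul, Nat.even_pow, show ¬Even 3 by decide] using this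
  obtain ⟨y, hy⟩ := ((Nat.even_sub hqp).mpr hparity).two_dvd
  obtain rfl : p = q + 2 * y := by omega
  have hyq : y ≤ q := by
    by_contra! hlt
    nlinarith
  obtain ⟨x, rfl⟩ := Nat.exists_eq_add_of_le' hyq
  exact ⟨x, y, by linarith, by ring, rfl⟩

/-! ### The factorisation of `x ^ 3 + 1` -/

theorem eq_two_of_sq_add_six_mul_sq_eq_twelve_mul_pow_four_add_one {a b : ℕ} (ha : a ≠ 0)
    (h : b ^ 2 + 6 * a ^ 2 = 12 * a ^ 4 + 1) : a = 2 := by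
  obtain ⟨v, hv⟩ : ∃ v, 4 * a ^ 2 = v + 1 := Nat.exists_eq_succ_of_ne_zero (by positivity)
  have hpell : IsPellThree (2 * b) v := by
    unfold IsPellThree
    zify at h hv ⊢
    linear_combination 4 * h + 3 * (v + 4 * a ^ 2 - 1 : ℤ) * hv
  obtain ⟨p, q, -, hp, hq, rfl⟩ := hpell.exists_sqrt_two_mul_of_even (even_two_mul b)
  obtain ⟨x, y, hxy, rfl, rfl⟩ :=
    exists_isPellThree_of_sq_add_two_eq_three_mul_sq (p := p) (q := q) (by omega)
  exact hxy.eq_two_of_mul_add_two_mul_eq_two_mul_sq (by linarith)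

theorem eq_zero_of_four_mul_sq_add_two_mul_add_one_eq_sq {i b : ℕ}
    (h : 4 * i ^ 2 + 2 * i + 1 = b ^ 2) : i = 0 := by
  by_contra hi
  have hlower : 2 * i < b := lt_of_pow_lt_pow_left₀ 2 b.zero_le (by linarith)
  have hupper : b < 2 * i + 1 := lt_of_pow_lt_pow_left₀ 2 (by omega) (by ring_nf; omega)
  omega

-- In the next two lemmas `k` stands for `x ^ 2 - x + 1`, where `x = 2m - 1`.
theorem eq_one_of_mul_eq_sq_of_not_three_dvd {m k y : ℕ} (hk : k + 6 * m = 4 * m ^ 2 + 3)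
    (h : m * k = y ^ 2) (h3 : ¬3 ∣ m) : m = 1 ∧ y = 1 := by
  have hcop : m.Coprime k := by
    rw [← Nat.coprime_add_mul_right_right m k 6, hk, show 4 * m ^ 2 + 3 = 3 + 4 * m * m by ring,
      Nat.coprime_add_mul_right_right]
    exact (Nat.prime_three.coprime_iff_not_dvd.mpr h3).symm
  obtain ⟨a, b, -, rfl, -⟩ := exists_eq_pow_of_coprime_of_mul_eq_pow two_ne_zero hcop h
  obtain ⟨i, rfl⟩ : ∃ i, m = i + 1 := Nat.exists_eq_succ_of_ne_zero (by rintro rfl; simp at h3)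
  obtain rfl : i = 0 :=
    eq_zero_of_four_mul_sq_add_two_mul_add_one_eq_sq (b := b) (by linarith)
  have hy : y ^ 2 = 1 := by omega
  exact ⟨rfl, (Nat.pow_eq_one.mp hy).resolve_right two_ne_zero⟩

theorem eq_twelve_of_mul_eq_sq_of_three_dvd {m k y : ℕ} (hm : m ≠ 0)
    (hk : k + 6 * m = 4 * m ^ 2 + 3) (h : m * k = y ^ 2) (h3 : 3 ∣ m) : m = 12 ∧ y = 78 := by
  obtain ⟨n, rfl⟩ := h3
  obtain ⟨l, rfl⟩ : 3 ∣ k :=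
    (Nat.dvd_add_left (show 3 ∣ 6 * (3 * n) by omega)).mp ⟨12 * n ^ 2 + 1, by rw [hk]; ring⟩
  obtain ⟨r, rfl⟩ : 3 ∣ y :=
    Nat.prime_three.dvd_of_dvd_pow (n := 2) ⟨n * (3 * l), by rw [← h]; ring⟩
  have hl : l + 6 * n = 12 * n ^ 2 + 1 := by linarith
  have hcop : n.Coprime l := by
    rw [← Nat.coprime_add_mul_right_right n l 6, hl, show 12 * n ^ 2 + 1 = 1 + 12 * n * n by ring]
    simp
  obtain ⟨a, b, rfl, rfl, rfl⟩ :=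
    exists_eq_pow_of_coprime_of_mul_eq_pow (c := r) two_ne_zero hcop (by linarith)
  obtain rfl := eq_two_of_sq_add_six_mul_sq_eq_twelve_mul_pow_four_add_one (a := a) (b := b)
    (by rintro rfl; simp at hm) (by linear_combination hl)
  obtain rfl : b = 13 := Nat.pow_left_injective two_ne_zero (show b ^ 2 = 13 ^ 2 by omega)
  simp

theorem stmt_7 (x y : ℤ) (hx : 0 < x) (hy : 0 < y)
    (h : x ^ 3 = 2 * y ^ 2 - 1) : (x = 1 ∧ y = 1) ∨ (x = 23 ∧ y = 78) := by
  lift x to ℕ using hx.le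
  lift y to ℕ using hy.le
  have hcube : x ^ 3 + 1 = 2 * y ^ 2 := by
    zify
    linarith
  have hcube_odd : Odd (x ^ 3) := Nat.not_even_iff_odd.mp fun ⟨r, hr⟩ => by omega
  obtain ⟨i, rfl⟩ := (Nat.odd_pow_iff three_ne_zero).mp hcube_odd
  have hfactor : (i + 1) * (4 * i ^ 2 + 2 * i + 1) = y ^ 2 := by linarith
  have hk : 4 * i ^ 2 + 2 * i + 1 + 6 * (i + 1) = 4 * (i + 1) ^ 2 + 3 := by ring
  by_cases h3 : 3 ∣ i + 1
  · obtain ⟨hi, rfl⟩ := eq_twelve_of_mul_eq_sq_of_three_dvd i.succ_ne_zero hk hfactor h3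
    obtain rfl : i = 11 := by omega
    simp
  · obtain ⟨hi, rfl⟩ := eq_one_of_mul_eq_sq_of_not_three_dvd hk hfactor h3
    obtain rfl : i = 0 := by omega
    simp
end

section
/- Let d be a positive integer which is not a square, let (u₁, v₁) be the fundamental (smallest positive) solution of the Pell equation u² − d v² = 1, and for each positive integer k let (u_k, v_k) be defined by u_k + v_k√d = (u₁ + v₁√d)^k. If k is even, then every prime factor p of u_k satisfies p ≡ 1 (mod 8) or p ≡ −1 (mod 8). -/
/-!
Squaring a solution `u + v√d` of the Pell equation gives a solution with first coordinate
`u² + d v² = 2u² - 1`. If a prime `p` divides it, then `p` is odd and `2u² ≡ 1 (mod p)`, so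
`2 ≡ (2u)²` is a square modulo `p`, and the second supplement to quadratic reciprocity applies.
-/

theorem isSquare_of_mul_sq_eq_one {M : Type*} [CommMonoid M] {c u : M} (h : c * u ^ 2 = 1) :
    IsSquare c :=
  ⟨c * u, calc
    c = c * (c * u ^ 2) := by rw [h, mul_one]
    _ = c * u * (c * u) := by rw [mul_mul_mul_comm, sq, mul_assoc]⟩

theorem prime_mod_eight_of_dvd_two_mul_sq_sub_one {p : ℕ} (hp : p.Prime) {u : ℤ}
    (h : (p : ℤ) ∣ 2 * u ^ 2 - 1) : p % 8 = 1 ∨ p % 8 = 7 := by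
  have : Fact p.Prime := ⟨hp⟩
  have hp_ne_two : p ≠ 2 := by
    rintro rfl
    push_cast at h
    omega
  have two_mul_sq : (2 : ZMod p) * (u : ZMod p) ^ 2 = 1 := by
    rw [← ZMod.intCast_zmod_eq_zero_iff_dvd] at h
    push_cast at h
    exact sub_eq_zero.mp h
  exact (ZMod.exists_sq_eq_two_iff hp_ne_two).mp (isSquare_of_mul_sq_eq_one two_mul_sq)

theorem pell_x_mul_self {d : ℤ} (a : Pell.Solution₁ d) : (a * a).x = 2 * a.x ^ 2 - 1 := by
  rw [Pell.Solution₁.x_mul]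
  linear_combination -a.prop

theorem stmt_9_general {d : ℤ} {b : Pell.Solution₁ d} (hb : IsSquare b)
    {p : ℕ} (hp : p.Prime) (hdvd : (p : ℤ) ∣ b.x) : p % 8 = 1 ∨ p % 8 = 7 := by
  obtain ⟨a, rfl⟩ := hb
  rw [pell_x_mul_self] at hdvd
  exact prime_mod_eight_of_dvd_two_mul_sq_sub_one hp hdvd

theorem stmt_9 (d : ℤ) (hd : 0 < d) (hdsq : ¬ IsSquare d)
    (a : Pell.Solution₁ d) (ha : Pell.IsFundamental a)
    (k : ℕ) (hk : 0 < k) (hke : Even k)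
    (p : ℕ) (hp : p.Prime) (hdvd : (p : ℤ) ∣ (a ^ k).x) :
    p % 8 = 1 ∨ p % 8 = 7 :=
  stmt_9_general (hke.isSquare_pow a) hp hdvd
end

section
/- Let d be a positive integer which is not a square, let (u₁, v₁) be the fundamental (smallest positive) solution of the Pell equation u² − d v² = 1, and for each positive integer k let (u_k, v_k) be defined by u_k + v_k√d = (u₁ + v₁√d)^k. If q ∈ {2, 3, 5} and q divides u_k for some positive integer k, then q divides u₁. -/
/-!
The second coordinate of a solution `a` of `x² - d y² = 1` divides that of every power of `a`.
Writing `(aᵏ).y = a.y * c`, the two Pell equations give `(1 - a.x²) c² = 1 - (aᵏ).x²`, which is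
`1` modulo any divisor `q` of `(aᵏ).x`. If `q ∣ 30`, then every residue satisfies `t⁵ = t` because
`p - 1 ∣ 4` for `p = 2, 3, 5`. Hence `c⁴ = 1`, so `(1 - a.x²)² = 1`, that is, `a.x⁴ = 2 a.x²`, and
this forces `a.x = 0` because `2` is not a nonzero square modulo `2`, `3` or `5`.
-/

theorem eq_zero_of_one_sub_sq_mul_sq_eq_one {R : Type*} [CommRing R]
    (pow_five : ∀ t : R, t ^ 5 = t) {u c : R} (h : (1 - u ^ 2) * c ^ 2 = 1) : u = 0 := by
  have c_pow_four : c ^ 4 = 1 := by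
    linear_combination (1 - c ^ 4) * h + (1 - u ^ 2) * c * pow_five c
  have u_pow_four : u ^ 4 = 2 * u ^ 2 := by
    linear_combination ((1 - u ^ 2) * c ^ 2 + 1) * h - (1 - u ^ 2) ^ 2 * c_pow_four
  have u_eq_two_mul_cube : u = 2 * u ^ 3 := by linear_combination u * u_pow_four - pow_five u
  have three_mul_u : 3 * u = 0 := by
    linear_combination -u_eq_two_mul_cube - 2 * u ^ 2 * u_eq_two_mul_cube - 4 * pow_five u
  -- Twice the odd part of the expansion of `(1 + u)⁵ = 1 + u`, reduced by `u⁵ = u`.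
  have odd_part : 20 * u ^ 3 + 10 * u = 0 := by
    linear_combination pow_five (1 + u) - pow_five (1 - u) - 2 * pow_five u
  linear_combination 7 * three_mul_u - odd_part - 10 * u_eq_two_mul_cube

theorem pow_five_eq_self_of_dvd_thirty {n : ℕ} (hn : n ∣ 30) (t : ZMod n) : t ^ 5 = t := by
  have pow_five : ∀ s : ZMod 30, s ^ 5 = s := by decide
  obtain ⟨s, rfl⟩ := ZMod.castHom_surjective hn t
  rw [← map_pow, pow_five]

section PellSolution

variable {d : ℤ}

theorem pell_y_dvd_y_pow (a : Pell.Solution₁ d) (k : ℕ) : a.y ∣ (a ^ k).y := by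
  induction k with
  | zero => simp
  | succ k ih =>
    rw [pow_succ, Pell.Solution₁.y_mul]
    exact dvd_add (dvd_mul_left _ _) (ih.mul_right _)

theorem pell_y_dvd_y_zpow (a : Pell.Solution₁ d) (k : ℤ) : a.y ∣ (a ^ k).y := by
  obtain ⟨n, rfl | rfl⟩ := k.eq_nat_or_neg
  · simpa only [zpow_natCast] using pell_y_dvd_y_pow a n
  · simpa only [zpow_neg, zpow_natCast, Pell.Solution₁.y_inv, dvd_neg] using pell_y_dvd_y_pow a n

theorem pell_one_sub_x_sq_mul_sq_of_y_eq_mul {a b : Pell.Solution₁ d} {c : ℤ} (hc : b.y = a.y * c) :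
    (1 - a.x ^ 2) * c ^ 2 = 1 - b.x ^ 2 := by
  rw [a.prop_x, b.prop_x, hc]
  ring

theorem pell_intCast_x_eq_zero_of_y_dvd_y {R : Type*} [CommRing R] (pow_five : ∀ t : R, t ^ 5 = t)
    {a b : Pell.Solution₁ d} (hy : a.y ∣ b.y) (hb : (b.x : R) = 0) : (a.x : R) = 0 := by
  obtain ⟨c, hc⟩ := hy
  have h := congrArg (Int.cast : ℤ → R) (pell_one_sub_x_sq_mul_sq_of_y_eq_mul hc)
  push_cast at h
  refine eq_zero_of_one_sub_sq_mul_sq_eq_one pow_five (h.trans ?_)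
  rw [hb, zero_pow two_ne_zero, sub_zero]

end PellSolution

theorem stmt_11_general {d : ℤ} (a : Pell.Solution₁ d) {q : ℤ} (hq : q ∣ 30) {k : ℤ}
    (hdvd : q ∣ (a ^ k).x) : q ∣ a.x := by
  have pow_five := pow_five_eq_self_of_dvd_thirty (Int.natAbs_dvd_natAbs.mpr hq)
  rw [← Int.natAbs_dvd, ← ZMod.intCast_zmod_eq_zero_iff_dvd] at hdvd ⊢
  exact pell_intCast_x_eq_zero_of_y_dvd_y pow_five (pell_y_dvd_y_zpow a k) hdvd

theorem stmt_11 (d : ℤ) (hd : 0 < d) (hdsq : ¬ IsSquare d)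
    (a : Pell.Solution₁ d) (ha : Pell.IsFundamental a)
    (q : ℤ) (hq : q ∈ ({2, 3, 5} : Set ℤ))
    (k : ℕ) (hk : 0 < k) (hdvd : q ∣ (a ^ k).x) : q ∣ a.x := by
  have hq30 : q ∣ 30 := by rcases hq with rfl | rfl | rfl <;> norm_num
  exact stmt_11_general a hq30 (k := k) (by rwa [zpow_natCast])
end

section
/- Let d be a positive integer which is not a square, let (u₁, v₁) be the fundamental (smallest positive) solution of the Pell equation u² − d v² = 1, and for each positive integer k let (u_k, v_k) be defined by u_k + v_k√d = (u₁ + v₁√d)^k. If r and s are positive integers with 2 dividing u_r and 2 not dividing u_s, then r is odd and s is even. -/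
/-!
Reducing `x² - d y² = 1` modulo 2 shows that `x` is even exactly when `d` and `y` are both odd.
So `x x' + d y y'`, the first coordinate of a product, is even exactly when one of `x`, `x'` is
even and the other odd: the parity of `x + 1` is a homomorphism from the group of solutions
to `ℤ/2ℤ`.
-/

section

variable {d : ℤ}

theorem pell_even_x_iff (a : Pell.Solution₁ d) : Even a.x ↔ Odd d ∧ Odd a.y := by
  have parity : Even (a.x ^ 2) ↔ Even (1 + d * a.y ^ 2) := by rw [a.prop_x]
  simpa [Int.even_add, Int.even_mul, Int.even_pow] using parity

theorem pell_even_x_mul (a b : Pell.Solution₁ d) :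
    Even (a * b).x ↔ Xor (Even a.x) (Even b.x) := by
  have ha := pell_even_x_iff a
  have hb := pell_even_x_iff b
  simp only [← Int.not_even_iff_odd] at ha hb
  rw [Pell.Solution₁.x_mul, Int.even_add, Int.even_mul, Int.even_mul, Int.even_mul, xor_def]
  tauto

theorem pell_even_x_pow (a : Pell.Solution₁ d) (n : ℕ) :
    Even (a ^ n).x ↔ Even a.x ∧ Odd n := by
  induction n with
  | zero => simp
  | succ n ih =>
    rw [pow_succ, pell_even_x_mul, ih, Nat.odd_add_one, xor_def]
    tauto

theorem pell_even_x_zpow (a : Pell.Solution₁ d) (n : ℤ) :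
    Even (a ^ n).x ↔ Even a.x ∧ Odd n := by
  obtain ⟨k, rfl | rfl⟩ := n.eq_nat_or_neg <;> simp [pell_even_x_pow]

theorem stmt_12_general (a : Pell.Solution₁ d) {r s : ℤ}
    (hur : 2 ∣ (a ^ r).x) (hus : ¬ 2 ∣ (a ^ s).x) :
    Odd r ∧ Even s := by
  rw [← even_iff_two_dvd, pell_even_x_zpow] at hur hus
  obtain ⟨x_even, r_odd⟩ := hur
  have s_not_odd : ¬ Odd s := fun s_odd => hus ⟨x_even, s_odd⟩
  exact ⟨r_odd, Int.not_odd_iff_even.mp s_not_odd⟩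

end

theorem stmt_12 (d : ℤ) (hd : 0 < d) (hdsq : ¬ IsSquare d)
    (a : Pell.Solution₁ d) (ha : Pell.IsFundamental a)
    (r s : ℕ) (hr : 0 < r) (hs : 0 < s)
    (hur : 2 ∣ (a ^ r).x) (hus : ¬ 2 ∣ (a ^ s).x) :
    Odd r ∧ Even s := by
  exact_mod_cast stmt_12_general a (r := r) (s := s) (mod_cast hur) (mod_cast hus)
end

section
/- Let a and b be integers with a > 1, b > 1, a ≡ 2 (mod 3) and b ≡ 0 (mod 3). If positive integers n and x satisfy (a^n − 1)(b^n − 1) = x², then n is even. -/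
theorem neg_one_pow_sub_one_mul_zero_pow_sub_one_of_odd {R : Type*} [Ring R] {n : ℕ}
    (hn : Odd n) : ((-1 : R) ^ n - 1) * (0 ^ n - 1) = 2 := by
  rw [hn.neg_one_pow, zero_pow hn.pos.ne']
  norm_num

theorem stmt_15_general {R S : Type*} [Ring R] [Ring S] (f : R →+* S)
    (two_not_square : ¬IsSquare (2 : S)) {a b : R} (ha : f a = -1) (hb : f b = 0) {n : ℕ}
    (h : IsSquare ((a ^ n - 1) * (b ^ n - 1))) : Even n := by
  by_contra hn
  have image_eq_two : f ((a ^ n - 1) * (b ^ n - 1)) = 2 := by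
    simpa only [map_mul, map_sub, map_pow, map_one, ha, hb] using
      neg_one_pow_sub_one_mul_zero_pow_sub_one_of_odd (R := S) (Nat.not_even_iff_odd.mp hn)
  exact two_not_square (image_eq_two ▸ h.map f)

theorem stmt_15 (a b : ℤ) (ha : 1 < a) (hb : 1 < b)
    (ha3 : a % 3 = 2) (hb3 : b % 3 = 0)
    (n : ℕ) (x : ℤ) (hn : 0 < n) (hx : 0 < x)
    (h : (a ^ n - 1) * (b ^ n - 1) = x ^ 2) : Even n := by
  have ha_mod : (a : ZMod 3) = -1 := by
    exact_mod_cast (ZMod.intCast_eq_intCast_iff' a (-1) 3).mpr (by omega)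
  have hb_mod : (b : ZMod 3) = 0 := (ZMod.intCast_zmod_eq_zero_iff_dvd b 3).mpr (by omega)
  have two_not_square : ¬IsSquare (2 : ZMod 3) := by decide
  exact stmt_15_general (Int.castRingHom (ZMod 3)) two_not_square ha_mod hb_mod
    (h ▸ IsSquare.sq x)
end
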